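/- arXiv:2205.11105 — 3 statements merged into one kernel-verified Lean document; each statement's English description precedes it below -/
import Mathlib

section
/- Let R be a ring and let T be a silting complex in D(Mod R). Then there exist finitely many objects T₀, …, T_{n−1} ∈ Add(T) such that the object T' = T ⊕ T₀ ⊕ ⋯ ⊕ T_{n−1} is a silting complex equivalent to T (i.e. Add(T') = Add(T)) and T' is good, i.e. R ∈ thick(T'). In particular, every silting complex is equivalent to a good silting complex. -/
/-!
The idea is to resolve a shift of `R` by coproducts of copies of `T`, and to stop after finitely
many steps because `T` is bounded.

Let `V = T^{⊥>0}` be the aisle, and let `T` be isomorphic to a complex `P` of projectives in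
degrees `[a, b]`. Since `V` is the left orthogonal of `T^{⊥≤0}` (`mem_perpGT_iff`), it contains
`T` and all its coproducts, and it lies in `D^{≤ b}` because `D^{> b} ⊆ T^{⊥≤0}`
(`isLE_of_mem_perpGT`). Every `X ∈ V` sits in a triangle `C ⟶ ∐ T ⟶ X ⟶ C⟦1⟧` with `C ∈ V`: take
the coproduct over all maps from `T` to `X` (`exists_precover`). Iterating `m` times
gives a map `X ⟶ C⟦m⟧` with `C ∈ V` whose cone is an iterated extension of shifts of `m`
coproducts of copies of `T` (`exists_tower`). The object `X = R⟦-a⟧` lies in `V`, and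
`Hom(R⟦-a⟧, C⟦m⟧)` vanishes once `m > b - a`, so `R` is up to shift a retract of that cone
(`exists_ringObj_mem`). The `m` coproducts that occur are the required `T_k`.

The object `T' = T ⊕ T₀ ⊕ ⋯` is itself a coproduct of copies of `T` having `T` as a retract, so it
defines the same two orthogonal classes and the same `Add` (`addClosure_eq`, `isSilting_of_iso`).
That `T'` is again a bounded complex of projectives requires comparing coproducts in the derived
category with coproducts of complexes; for K-projective complexes null-homotopies can be assembled
summand by summand (`exists_coprod_iso`).
-/

open CategoryTheory Limits Pretriangulated

noncomputable section

namespace Stmt5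

variable (R : Type) [Ring R] [HasDerivedCategory (ModuleCat.{0} Rᵐᵒᵖ)]
  [HasCoproducts.{0} (DerivedCategory (ModuleCat.{0} Rᵐᵒᵖ))]

/-- The derived category of right `R`-modules. -/
abbrev D := DerivedCategory (ModuleCat.{0} Rᵐᵒᵖ)

/-- `Add T`: the class of direct summands of set-indexed coproducts of copies of `T`. -/
def AddClosure (T : D R) : Set (D R) :=
  {X | ∃ (ι : Type) (s : X ⟶ ∐ (fun _ : ι => T)) (r : (∐ (fun _ : ι => T)) ⟶ X),
    s ≫ r = 𝟙 X}

/-- `T^{⊥>0}` : the objects `X` with `Hom(T, X[i]) = 0` for all `i > 0`. -/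
def perpGT (T : D R) : Set (D R) :=
  {X | ∀ i : ℤ, 0 < i → ∀ f : T ⟶ X⟦i⟧, f = 0}

/-- `T^{⊥≤0}` : the objects `X` with `Hom(T, X[i]) = 0` for all `i ≤ 0`. -/
def perpLE (T : D R) : Set (D R) :=
  {X | ∀ i : ℤ, i ≤ 0 → ∀ f : T ⟶ X⟦i⟧, f = 0}

/-- A (bounded) silting complex: an object of the derived category which is isomorphic to a
bounded complex of projectives and such that `(T^{⊥>0}, T^{⊥≤0})` is a t-structure. -/
def IsSiltingComplex (T : D R) : Prop :=
  (∃ P : CochainComplex (ModuleCat.{0} Rᵐᵒᵖ) ℤ,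
    (∀ n : ℤ, Projective (P.X n)) ∧
    (∃ a b : ℤ, ∀ n : ℤ, (n < a ∨ b < n) → IsZero (P.X n)) ∧
    Nonempty (T ≅ DerivedCategory.Q.obj P)) ∧
  (perpLE R T = {X | ∀ A ∈ perpGT R T, ∀ f : A ⟶ X, f = 0}) ∧
  (∀ X ∈ perpGT R T, X⟦(1 : ℤ)⟧ ∈ perpGT R T) ∧
  (∀ X : D R, ∃ (A B : D R) (f : A ⟶ X) (g : X ⟶ B) (h : B ⟶ A⟦(1 : ℤ)⟧),
    A ∈ perpGT R T ∧ B ∈ perpLE R T ∧ Triangle.mk f g h ∈ (distTriang (D R)))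

/-- A class of objects is *thick* if it is closed under isomorphisms, shifts, cones and
direct summands. -/
def IsThickClass (S : Set (D R)) : Prop :=
  (∀ (Z Z' : D R), (Z ≅ Z') → Z ∈ S → Z' ∈ S) ∧
  (∀ Z ∈ S, ∀ n : ℤ, Z⟦n⟧ ∈ S) ∧
  (∀ T : Triangle (D R), T ∈ (distTriang (D R)) → T.obj₁ ∈ S → T.obj₂ ∈ S → T.obj₃ ∈ S) ∧
  (∀ (Z Y : D R), Z ∈ S → ∀ (i : Y ⟶ Z) (p : Z ⟶ Y), i ≫ p = 𝟙 Y → Y ∈ S)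

/-- `thick(T)` : the smallest thick subcategory containing `T`. -/
def thickClosure (T : D R) : Set (D R) :=
  ⋂₀ {S : Set (D R) | IsThickClass R S ∧ T ∈ S}

/-- `R`, viewed as a stalk complex in degree `0` in the derived category of right
`R`-modules. -/
def ringObj : D R :=
  (DerivedCategory.singleFunctor (ModuleCat.{0} Rᵐᵒᵖ) 0).obj (ModuleCat.of Rᵐᵒᵖ Rᵐᵒᵖ)

/-! ### Maps out of K-projective complexes -/

section

set_option linter.unusedSectionVars false

variable {R}

/-- Maps in the derived category out of a K-projective complex are represented by chain maps. -/
lemma exists_Q_map_eq (P K : CochainComplex (ModuleCat.{0} Rᵐᵒᵖ) ℤ) [P.IsKProjective]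
    (f : DerivedCategory.Q.obj P ⟶ DerivedCategory.Q.obj K) :
    ∃ g : P ⟶ K, DerivedCategory.Q.map g = f := by
  obtain ⟨g, hg⟩ := (CochainComplex.IsKProjective.Qh_map_bijective P
    ((HomotopyCategory.quotient _ _).obj K)).surjective
    ((DerivedCategory.quotientCompQhIso _).hom.app P ≫ f ≫
      (DerivedCategory.quotientCompQhIso _).inv.app K)
  obtain ⟨g, rfl⟩ := (HomotopyCategory.quotient _ _).map_surjective g
  refine ⟨g, ?_⟩
  rw [← cancel_epi ((DerivedCategory.quotientCompQhIso _).hom.app P),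
    ← DerivedCategory.quotientCompQhIso_hom_naturality, hg]
  simp

/-- A chain map out of a K-projective complex that vanishes in the derived category is
null-homotopic. -/
lemma homotopy_of_Q_map_eq_zero {P K : CochainComplex (ModuleCat.{0} Rᵐᵒᵖ) ℤ} [P.IsKProjective]
    (g : P ⟶ K) (hg : DerivedCategory.Q.map g = 0) : Nonempty (Homotopy g 0) := by
  refine ⟨HomotopyCategory.homotopyOfEq _ _ ?_⟩
  apply (CochainComplex.IsKProjective.Qh_map_bijective P
    ((HomotopyCategory.quotient _ _).obj K)).injective
  rw [← cancel_mono ((DerivedCategory.quotientCompQhIso _).hom.app K),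
    DerivedCategory.quotientCompQhIso_hom_naturality, hg]
  simp

/-- A K-projective complex concentrated in degrees `≥ a` has no nonzero map in the
derived category to an object with cohomology in degrees `< a`. -/
lemma hom_eq_zero_of_isLE (P : CochainComplex (ModuleCat.{0} Rᵐᵒᵖ) ℤ) [P.IsKProjective]
    (a m : ℤ) [P.IsStrictlyGE a] (hm : m < a) (Y : D R) (hY : Y.IsLE m)
    (f : DerivedCategory.Q.obj P ⟶ Y) : f = 0 := by
  obtain ⟨K, hK, ⟨e⟩⟩ := Y.exists_iso_Q_obj_of_isLE m
  obtain ⟨g, hg⟩ := exists_Q_map_eq P K (f ≫ e.hom)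
  have : g = 0 := by
    ext i : 1
    by_cases hi : i < a
    · exact (P.isZero_of_isStrictlyGE a i hi).eq_of_src _ _
    · exact (K.isZero_of_isStrictlyLE m i (by lia)).eq_of_tgt _ _
  rw [← cancel_mono e.hom, ← hg, this]
  simp

/-! ### Coproducts of copies of a K-projective complex in the derived category -/

/-- The coproduct of `ι` copies of `P`, taken in the category of cochain complexes rather than
in the derived category. -/
abbrev coprodCx (ι : Type) (P : CochainComplex (ModuleCat.{0} Rᵐᵒᵖ) ℤ) :
    CochainComplex (ModuleCat.{0} Rᵐᵒᵖ) ℤ :=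
  ∐ (fun _ : ι => P)

/-- In each degree, the coproduct of complexes is the coproduct of modules. -/
def coprodCxIsColimit (ι : Type) (P : CochainComplex (ModuleCat.{0} Rᵐᵒᵖ) ℤ) (n : ℤ) :
    IsColimit (Cofan.mk ((coprodCx ι P).X n)
      (fun i => (Sigma.ι (fun _ : ι => P) i).f n) : Cofan (fun _ : ι => P.X n)) :=
  isColimitMapCoconeCofanMkEquiv (HomologicalComplex.eval _ _ n) _ _
    (isColimitOfPreserves (HomologicalComplex.eval _ _ n) (coproductIsCoproduct (fun _ : ι => P)))

lemma coprodCx_hom_ext {ι : Type} {P : CochainComplex (ModuleCat.{0} Rᵐᵒᵖ) ℤ} {n : ℤ}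
    {M : ModuleCat.{0} Rᵐᵒᵖ} {f g : (coprodCx ι P).X n ⟶ M}
    (h : ∀ i, (Sigma.ι (fun _ : ι => P) i).f n ≫ f = (Sigma.ι (fun _ : ι => P) i).f n ≫ g) :
    f = g :=
  Cofan.IsColimit.hom_ext (coprodCxIsColimit ι P n) _ _ h

lemma coprodCx_projective (ι : Type) (P : CochainComplex (ModuleCat.{0} Rᵐᵒᵖ) ℤ) (n : ℤ)
    (hP : Projective (P.X n)) : Projective ((coprodCx ι P).X n) :=
  Projective.of_iso (P := ∐ fun _ : ι => P.X n)
    ((coproductIsCoproduct (fun _ : ι => P.X n)).coconePointUniqueUpToIso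
      (coprodCxIsColimit ι P n)) inferInstance

lemma coprodCx_isZero (ι : Type) (P : CochainComplex (ModuleCat.{0} Rᵐᵒᵖ) ℤ) (n : ℤ)
    (hP : IsZero (P.X n)) : IsZero ((coprodCx ι P).X n) := by
  rw [IsZero.iff_id_eq_zero]
  exact coprodCx_hom_ext fun i => hP.eq_of_src _ _

/-- Null-homotopies on the summands assemble to a null-homotopy on the coproduct. -/
lemma coprodCx_homotopy (ι : Type) (P K : CochainComplex (ModuleCat.{0} Rᵐᵒᵖ) ℤ)
    (g : coprodCx ι P ⟶ K) (h : ∀ i, Nonempty (Homotopy (Sigma.ι (fun _ : ι => P) i ≫ g) 0)) :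
    Nonempty (Homotopy g 0) := by
  let H i := (h i).some
  let φ (p q : ℤ) : (coprodCx ι P).X p ⟶ K.X q :=
    Cofan.IsColimit.desc (coprodCxIsColimit ι P p) (fun i => (H i).hom p q)
  have hφ (i : ι) (p q : ℤ) : (Sigma.ι (fun _ : ι => P) i).f p ≫ φ p q = (H i).hom p q :=
    Cofan.IsColimit.fac (coprodCxIsColimit ι P p) (fun i => (H i).hom p q) i
  refine ⟨⟨φ, fun p q hpq => coprodCx_hom_ext fun i => ?_, fun p => coprodCx_hom_ext fun i => ?_⟩⟩
  · rw [hφ, (H i).zero p q hpq, comp_zero]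
  · have := (H i).comm p
    rw [dNext_eq (i' := p + 1) _ (by simp), prevD_eq (j' := p - 1) _ (by simp)] at this ⊢
    simp only [HomologicalComplex.comp_f, HomologicalComplex.zero_f, add_zero] at this ⊢
    rw [this, Preadditive.comp_add, reassoc_of% (hφ i p (p - 1)),
      HomologicalComplex.Hom.comm_assoc, hφ]

lemma coprodCx_isKProjective (ι : Type) (P : CochainComplex (ModuleCat.{0} Rᵐᵒᵖ) ℤ)
    [P.IsKProjective] : (coprodCx ι P).IsKProjective where
  nonempty_homotopy_zero _ hL := coprodCx_homotopy _ _ _ _ fun _ =>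
    CochainComplex.IsKProjective.nonempty_homotopy_zero _ hL

/-- For `P` K-projective, coproducts of copies of `P` are computed in complexes. -/
lemma exists_coprod_iso (ι : Type) (P : CochainComplex (ModuleCat.{0} Rᵐᵒᵖ) ℤ)
    [P.IsKProjective] :
    Nonempty ((∐ fun _ : ι => DerivedCategory.Q.obj P) ≅ DerivedCategory.Q.obj (coprodCx ι P)) := by
  have := coprodCx_isKProjective ι P
  let r : (∐ fun _ : ι => DerivedCategory.Q.obj P) ⟶ DerivedCategory.Q.obj (coprodCx ι P) :=
    Sigma.desc fun i => DerivedCategory.Q.map (Sigma.ι (fun _ : ι => P) i)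
  let e := DerivedCategory.Q.objObjPreimageIso (∐ fun _ : ι => DerivedCategory.Q.obj P)
  choose g hg using fun i => exists_Q_map_eq P _
    (Sigma.ι (fun _ : ι => DerivedCategory.Q.obj P) i ≫ e.inv)
  let s : DerivedCategory.Q.obj (coprodCx ι P) ⟶ ∐ fun _ : ι => DerivedCategory.Q.obj P :=
    DerivedCategory.Q.map (Sigma.desc g) ≫ e.hom
  have hs (i : ι) : DerivedCategory.Q.map (Sigma.ι (fun _ : ι => P) i) ≫ s =
      Sigma.ι (fun _ : ι => DerivedCategory.Q.obj P) i := by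
    simp only [s]
    rw [← Functor.map_comp_assoc, Sigma.ι_desc, hg]
    simp
  -- `s ≫ r - 𝟙` vanishes on each summand, hence is represented by a null-homotopic chain map.
  refine ⟨⟨r, s, Sigma.hom_ext _ _ fun i => by simp [r, hs], ?_⟩⟩
  obtain ⟨f, hf⟩ := exists_Q_map_eq _ _ (s ≫ r - 𝟙 _)
  obtain ⟨h⟩ := coprodCx_homotopy ι P _ f fun i => homotopy_of_Q_map_eq_zero _ (by
    rw [Functor.map_comp, hf, Preadditive.comp_sub, reassoc_of% (hs i)]
    simp [r])
  rw [← sub_eq_zero, ← hf, DerivedCategory.Q_map_eq_of_homotopy _ h, Functor.map_zero]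

/-! ### The aisle of a silting complex -/

/-- The aisle is the left orthogonal of the coaisle: an object orthogonal to the coaisle is a
retract of the aisle part of its truncation triangle. -/
lemma mem_perpGT_iff {T : D R} (hT : IsSiltingComplex R T) (X : D R) :
    X ∈ perpGT R T ↔ ∀ B ∈ perpLE R T, ∀ f : X ⟶ B, f = 0 := by
  obtain ⟨-, hLE, -, htri⟩ := hT
  refine ⟨fun hX B hB f => ?_, fun hX => ?_⟩
  · rw [hLE] at hB
    exact hB X hX f
  · obtain ⟨A, B, f, g, h, hA, hB, hdist⟩ := htri X
    obtain ⟨s, hs⟩ : ∃ s : X ⟶ A, 𝟙 X = s ≫ f := Triangle.coyoneda_exact₂ _ hdist (𝟙 X)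
      ((Category.id_comp g).trans (hX B hB g))
    intro i hi u
    rw [← Category.comp_id u, ← CategoryTheory.Functor.map_id, hs, Functor.map_comp,
      ← Category.assoc, hA i hi (u ≫ s⟦i⟧'), zero_comp]

lemma self_mem_perpGT {T : D R} (hT : IsSiltingComplex R T) : T ∈ perpGT R T := by
  rw [mem_perpGT_iff hT]
  intro B hB f
  have := hB 0 le_rfl (f ≫ (shiftFunctorZero (D R) ℤ).inv.app B)
  rw [← cancel_mono ((shiftFunctorZero (D R) ℤ).inv.app B), this, zero_comp]

lemma coprod_mem_perpGT {T : D R} (hT : IsSiltingComplex R T) (ι : Type) :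
    (∐ fun _ : ι => T) ∈ perpGT R T := by
  rw [mem_perpGT_iff hT]
  intro B hB f
  refine Sigma.hom_ext _ _ fun i => ?_
  rw [comp_zero]
  exact (mem_perpGT_iff hT T).1 (self_mem_perpGT hT) B hB _

lemma hom_shift_shift_eq_zero {T Y : D R} (hY : Y ∈ perpGT R T) (a b : ℤ) (h : 0 < a + b)
    (f : T ⟶ (Y⟦a⟧)⟦b⟧) : f = 0 := by
  rw [← cancel_mono ((shiftFunctorAdd' (D R) a b (a + b) rfl).inv.app Y), zero_comp]
  exact hY _ h _

/-- The aisle of a silting complex isomorphic to a complex in degrees `≤ b` consists of objects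
with cohomology in degrees `≤ b`: objects with cohomology in degrees `> b` lie in the coaisle. -/
lemma isLE_of_mem_perpGT {T : D R} (hT : IsSiltingComplex R T) (b : ℤ) (hb : T.IsLE b)
    (X : D R) (hX : X ∈ perpGT R T) : X.IsLE b := by
  refine (DerivedCategory.TStructure.t.isLE_iff_orthogonal b (b + 1) rfl X).2 fun Y f hY => ?_
  refine (mem_perpGT_iff hT X).1 hX Y (fun i hi g => ?_) f
  have := DerivedCategory.TStructure.t.isGE_shift Y (b + 1) i (b + 1 - i)
  exact DerivedCategory.TStructure.t.zero g b (b + 1 - i)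

/-- An object of the aisle has an `Add T`-precover whose cocone again lies in the aisle. -/
lemma exists_precover {T : D R} (hT : IsSiltingComplex R T)
    (P : CochainComplex (ModuleCat.{0} Rᵐᵒᵖ) ℤ) [P.IsKProjective]
    (e : T ≅ DerivedCategory.Q.obj P) (X : D R) (hX : X ∈ perpGT R T) :
    ∃ (ι : Type) (C : D R) (f : C ⟶ ∐ fun _ : ι => T) (π : (∐ fun _ : ι => T) ⟶ X)
      (φ : X ⟶ C⟦(1 : ℤ)⟧), C ∈ perpGT R T ∧ Triangle.mk f π φ ∈ (distTriang (D R)) := by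
  -- Morphisms in the derived category may live in a larger universe, so the index set consists
  -- of the chain maps representing them.
  let K := DerivedCategory.Q.objPreimage X
  let eX : DerivedCategory.Q.obj K ≅ X := DerivedCategory.Q.objObjPreimageIso X
  let π : (∐ fun _ : (P ⟶ K) => T) ⟶ X :=
    Sigma.desc fun u => e.hom ≫ DerivedCategory.Q.map u ≫ eX.hom
  have hπ (v : T ⟶ X) : ∃ w, w ≫ π = v := by
    obtain ⟨u, hu⟩ := exists_Q_map_eq P K (e.inv ≫ v ≫ eX.inv)
    exact ⟨Sigma.ι (fun _ : (P ⟶ K) => T) u, by simp [π, hu]⟩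
  obtain ⟨C, f, φ, hdist⟩ := distinguished_cocone_triangle₁ π
  refine ⟨P ⟶ K, C, f, π, φ, fun i hi u => ?_, hdist⟩
  obtain ⟨j, hj, rfl⟩ : ∃ j : ℤ, 0 ≤ j ∧ i = 1 + j := ⟨i - 1, by lia, by lia⟩
  let α := (shiftFunctorAdd' (D R) 1 j (1 + j) rfl).hom.app C
  rw [← cancel_mono α, zero_comp]
  obtain ⟨v, hv⟩ : ∃ v : T ⟶ X⟦j⟧, u ≫ α = v ≫ φ⟦j⟧' := by
    obtain ⟨v, hv⟩ : ∃ v : T ⟶ X⟦j⟧, u ≫ α = v ≫ (j.negOnePow • φ⟦j⟧') :=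
      Triangle.coyoneda_exact₃ _
        (Triangle.shift_distinguished _ (rot_of_distTriang _ hdist) j) (u ≫ α)
        (hom_shift_shift_eq_zero (coprod_mem_perpGT hT _) j 1 (by lia) _)
    refine ⟨j.negOnePow • v, ?_⟩
    rw [hv]
    rw [Linear.units_smul_comp, Linear.comp_units_smul]
  rw [hv]
  obtain hj | rfl := hj.lt_or_eq
  · have h0 : v = 0 := hX j hj v
    rw [h0, zero_comp]
  · -- In degree `0`, every map from `T` to `X` factors through `π`, which composes to zero.
    obtain ⟨w, hw⟩ := hπ (v ≫ (shiftFunctorZero (D R) ℤ).hom.app X)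
    have hv' : v = (w ≫ π) ≫ (shiftFunctorZero (D R) ℤ).inv.app X := by
      rw [hw]; simp
    have h0 : π ≫ φ = 0 := comp_distTriang_mor_zero₂₃ _ hdist
    have h1 : v ≫ φ⟦(0 : ℤ)⟧' = 0 := by
      rw [hv', Category.assoc, ← (shiftFunctorZero (D R) ℤ).inv.naturality φ]
      simp [reassoc_of% h0]
    simp [h1]

/-! ### Thick classes -/

/-- Nonemptiness is needed for the zero object, obtained as the cone of an identity. -/
lemma IsThickClass.isTriangulated {S : Set (D R)} (hS : IsThickClass R S) (h : S.Nonempty) :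
    ObjectProperty.IsTriangulated (C := D R) (fun X => X ∈ S) := by
  obtain ⟨h1, h2, h3, -⟩ := hS
  obtain ⟨Z, hZ⟩ := h
  have i1 : ObjectProperty.IsClosedUnderIsomorphisms (C := D R) (fun X => X ∈ S) :=
    ⟨fun e h => h1 _ _ e h⟩
  have i2 : ObjectProperty.IsStableUnderShift (C := D R) (fun X => X ∈ S) ℤ :=
    ⟨fun a => ⟨fun X hX => h2 X hX a⟩⟩
  have i3 : ObjectProperty.IsTriangulatedClosed₃ (C := D R) (fun X => X ∈ S) :=
    ObjectProperty.IsTriangulatedClosed₃.mk' h3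
  have i4 := ObjectProperty.IsTriangulatedClosed₂.of_isTriangulatedClosed₃
    (C := D R) (P := fun X => X ∈ S)
  have i5 : ObjectProperty.ContainsZero (C := D R) (fun X => X ∈ S) :=
    ⟨⟨_, isZero_zero _, h3 _ (contractible_distinguished Z) hZ hZ⟩⟩
  exact { }

/-- Iterated precovers: an object `X` of the aisle maps to some `C⟦m⟧`, with `C` in the aisle,
with cone built from `m` coproducts of copies of `T`. -/
lemma exists_tower {T : D R} (hT : IsSiltingComplex R T)
    (P : CochainComplex (ModuleCat.{0} Rᵐᵒᵖ) ℤ) [P.IsKProjective]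
    (e : T ≅ DerivedCategory.Q.obj P) (m : ℕ) (X : D R) (hX : X ∈ perpGT R T) :
    ∃ (J : Fin m → Type) (C : D R) (φ : X ⟶ C⟦(m : ℤ)⟧), C ∈ perpGT R T ∧
      ∀ S : Set (D R), IsThickClass R S → T ∈ S → (∀ k, (∐ fun _ : J k => T) ∈ S) →
        ObjectProperty.trW (C := D R) (fun Y => Y ∈ S) φ := by
  induction m generalizing X with
  | zero =>
    refine ⟨Fin.elim0, X, (shiftFunctorZero (D R) ℤ).inv.app X, hX, fun S hS hTS _ => ?_⟩
    have := hS.isTriangulated ⟨T, hTS⟩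
    exact ObjectProperty.trW_of_isIso (C := D R) (fun Y => Y ∈ S) _
  | succ m ih =>
    obtain ⟨ι, C₁, f, π, φ, hC₁, hdist⟩ := exists_precover hT P e X hX
    obtain ⟨J, C, ψ, hC, hψ⟩ := ih C₁ hC₁
    refine ⟨Fin.cons ι J, C, φ ≫ ψ⟦(1 : ℤ)⟧' ≫
      (shiftFunctorAdd' (D R) (m : ℤ) 1 ((m + 1 : ℕ) : ℤ) (by simp)).inv.app C, hC,
      fun S hS hTS hJ => ?_⟩
    have := hS.isTriangulated ⟨T, hTS⟩
    refine MorphismProperty.comp_mem _ _ _ ?_ (MorphismProperty.comp_mem _ _ _ ?_ ?_)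
    · exact ObjectProperty.trW.mk' (C := D R) (fun Y => Y ∈ S) (rot_of_distTriang _ hdist) (hJ 0)
    · exact (hψ S hS hTS fun k => hJ k.succ).shift 1
    · exact ObjectProperty.trW_of_isIso (C := D R) (fun Y => Y ∈ S) _

/-- A zero morphism exhibits the shift of its source as a retract of its cone. -/
lemma mem_of_trW_zero {S : Set (D R)} (hS : IsThickClass R S) {X Y : D R}
    (h : ObjectProperty.trW (C := D R) (fun Y => Y ∈ S) (0 : X ⟶ Y)) : X⟦(1 : ℤ)⟧ ∈ S := by
  obtain ⟨Z, g, p, hdist, hZ⟩ := h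
  obtain ⟨i, hi⟩ := Triangle.coyoneda_exact₁ _ hdist (𝟙 (X⟦(1 : ℤ)⟧))
    ((Category.id_comp _).trans (Functor.map_zero (shiftFunctor (D R) (1 : ℤ)) X Y))
  exact hS.2.2.2 Z _ hZ i p hi.symm

/-- `R` lies in every thick class containing `T` and finitely many suitable coproducts of
copies of `T`. -/
lemma exists_ringObj_mem {T : D R} (hT : IsSiltingComplex R T) :
    ∃ (m : ℕ) (J : Fin m → Type), ∀ S : Set (D R), IsThickClass R S → T ∈ S →
      (∀ k, (∐ fun _ : J k => T) ∈ S) → ringObj R ∈ S := by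
  obtain ⟨⟨P, hproj, ⟨a, b, hab⟩, ⟨e⟩⟩, -⟩ := id hT
  have hGE : P.IsStrictlyGE a := by
    rw [CochainComplex.isStrictlyGE_iff]
    exact fun i hi => hab i (Or.inl hi)
  have hLE : P.IsStrictlyLE b := by
    rw [CochainComplex.isStrictlyLE_iff]
    exact fun i hi => hab i (Or.inr hi)
  have := P.isKProjective_of_projective b
  have hTb : T.IsLE b := DerivedCategory.TStructure.t.isLE_of_iso e.symm b
  have hR0 : (ringObj R).IsLE 0 := by unfold ringObj; infer_instance
  have hRV : (ringObj R)⟦-a⟧ ∈ perpGT R T := by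
    intro i hi f
    have h1 := DerivedCategory.TStructure.t.isLE_shift (ringObj R) 0 (-a) a
    have h2 := DerivedCategory.TStructure.t.isLE_shift ((ringObj R)⟦-a⟧) a i (a - i)
    rw [← cancel_epi e.inv, comp_zero]
    exact hom_eq_zero_of_isLE P a (a - i) (by lia) _ h2 _
  -- The length is chosen so that `C⟦m + a⟧` has cohomology in negative degrees only.
  obtain ⟨J, C, φ, hC, hφ⟩ := exists_tower hT P e (b - a + 1).toNat _ hRV
  refine ⟨_, J, fun S hS hTS hJ => ?_⟩
  have hφ0 : φ = 0 := by
    apply (shiftFunctor (D R) a).map_injective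
    rw [Functor.map_zero]
    have h0 := isLE_of_mem_perpGT hT b hTb C hC
    let m : ℤ := (((b - a + 1).toNat : ℕ) : ℤ)
    have h1 := DerivedCategory.TStructure.t.isLE_shift C b m (b - m)
    have h2 := DerivedCategory.TStructure.t.isLE_shift (C⟦m⟧) (b - m) a (b - m - a)
    let K : CochainComplex (ModuleCat.{0} Rᵐᵒᵖ) ℤ := (HomologicalComplex.single (ModuleCat.{0} Rᵐᵒᵖ) (ComplexShape.up ℤ) 0).obj
      (ModuleCat.of Rᵐᵒᵖ Rᵐᵒᵖ)
    have hK : ∀ n, Projective (K.X n) := by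
      intro n
      by_cases hn : n = 0
      · subst hn
        exact Projective.of_iso (HomologicalComplex.singleObjXSelf _ _ _).symm
          (ModuleCat.projective_of_free (Module.Basis.singleton Unit Rᵐᵒᵖ))
      · exact (HomologicalComplex.isZero_single_obj_X _ _ _ _ hn).projective
    have hK0 : K.IsStrictlyLE 0 := inferInstance
    have hK1 : K.IsStrictlyGE 0 := inferInstance
    have := K.isKProjective_of_projective 0
    let ε : DerivedCategory.Q.obj K ≅ ((ringObj R)⟦-a⟧)⟦a⟧ :=
      ((DerivedCategory.singleFunctorIsoCompQ _ 0).app _).symm ≪≫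
        (shiftFunctorCompIsoId (D R) (-a) a (by simp)).symm.app (ringObj R)
    rw [← cancel_epi ε.hom, comp_zero]
    exact hom_eq_zero_of_isLE K 0 (b - m - a) (by lia) _ h2 _
  have h := hφ S hS hTS hJ
  rw [hφ0] at h
  have h1 := hS.2.1 _ (mem_of_trW_zero hS h) (a - 1)
  refine hS.1 _ _ ?_ h1
  exact (shiftFunctorAdd' (D R) 1 (a - 1) a (by lia)).symm.app _ ≪≫
    (shiftFunctorCompIsoId (D R) (-a) a (by simp)).app (ringObj R)

/-! ### Replacing `T` by a coproduct of copies of `T` -/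

lemma nonempty_sigma_iso (T : D R) {κ : Type} (ι : κ → Type) :
    Nonempty ((∐ fun k => ∐ fun _ : ι k => T) ≅ ∐ fun _ : (Σ k, ι k) => T) :=
  ⟨sigmaSigmaIso _ (fun (k : κ) (_ : ι k) => T)⟩

lemma addClosure_eq {T T' : D R} {ι : Type} (e : T' ≅ ∐ fun _ : ι => T)
    (i : T ⟶ T') (p : T' ⟶ T) (hip : i ≫ p = 𝟙 T) :
    AddClosure R T' = AddClosure R T := by
  ext X
  constructor
  · rintro ⟨κ, s, r, hsr⟩
    obtain ⟨u⟩ := nonempty_sigma_iso T (fun _ : κ => ι)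
    let v : (∐ fun _ : κ => T') ≅ ∐ fun _ : (Σ _ : κ, ι) => T :=
      Sigma.mapIso (fun _ => e) ≪≫ u
    exact ⟨_, s ≫ v.hom, v.inv ≫ r, by simpa using hsr⟩
  · rintro ⟨κ, s, r, hsr⟩
    have h : Limits.Sigma.map (fun _ : κ => i) ≫ Limits.Sigma.map (fun _ : κ => p) = 𝟙 _ :=
      Sigma.hom_ext _ _ fun k => by simp [reassoc_of% hip]
    exact ⟨κ, s ≫ Limits.Sigma.map (fun _ => i), Limits.Sigma.map (fun _ => p) ≫ r, by
      simp [reassoc_of% h, hsr]⟩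

lemma hom_eq_zero_iff {T T' : D R} {ι : Type} (e : T' ≅ ∐ fun _ : ι => T)
    (i : T ⟶ T') (p : T' ⟶ T) (hip : i ≫ p = 𝟙 T) (Y : D R) :
    (∀ f : T' ⟶ Y, f = 0) ↔ ∀ f : T ⟶ Y, f = 0 := by
  refine ⟨fun h f => ?_, fun h f => ?_⟩
  · rw [← Category.id_comp f, ← hip, Category.assoc, h (p ≫ f), comp_zero]
  · rw [← cancel_epi e.inv]
    exact Sigma.hom_ext _ _ fun k => by rw [h (_ ≫ _), comp_zero, comp_zero]

/-- Passing from `T` to a coproduct of copies of `T` having `T` as a retract does not change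
the two classes of the t-structure. -/
lemma isSilting_of_iso {T T' : D R} (hT : IsSiltingComplex R T) {ι : Type}
    (e : T' ≅ ∐ fun _ : ι => T) (i : T ⟶ T') (p : T' ⟶ T) (hip : i ≫ p = 𝟙 T) :
    IsSiltingComplex R T' := by
  have h1 : perpGT R T' = perpGT R T := by
    ext X
    exact forall₂_congr fun j _ => hom_eq_zero_iff e i p hip _
  have h2 : perpLE R T' = perpLE R T := by
    ext X
    exact forall₂_congr fun j _ => hom_eq_zero_iff e i p hip _
  obtain ⟨⟨P, hproj, ⟨a, b, hab⟩, ⟨eP⟩⟩, hrest⟩ := hT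
  refine ⟨?_, by rw [h1, h2]; exact hrest⟩
  have hLE : P.IsStrictlyLE b := by
    rw [CochainComplex.isStrictlyLE_iff]
    exact fun i hi => hab i (Or.inr hi)
  have := P.isKProjective_of_projective b
  obtain ⟨u⟩ := exists_coprod_iso ι P
  exact ⟨coprodCx ι P, fun n => coprodCx_projective ι P n (hproj n),
    ⟨a, b, fun n hn => coprodCx_isZero ι P n (hab n hn)⟩,
    ⟨e ≪≫ Sigma.mapIso (fun _ => eP) ≪≫ u⟩⟩

end

/-- Every silting complex `T` in `D(Mod R)` is equivalent to a good one:
there are finitely many objects `T₀, …, T_{n-1} ∈ Add(T)` such that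
`T' = T ⊕ T₀ ⊕ ⋯ ⊕ T_{n-1}` is a silting complex with `Add(T') = Add(T)` and
`R ∈ thick(T')`. -/
theorem stmt_5 (T : D R) (hT : IsSiltingComplex R T) :
    ∃ (n : ℕ) (Ts : Fin n → D R),
      (∀ i : Fin n, Ts i ∈ AddClosure R T) ∧
      IsSiltingComplex R (∐ (Matrix.vecCons T Ts)) ∧
      AddClosure R (∐ (Matrix.vecCons T Ts)) = AddClosure R T ∧
      ringObj R ∈ thickClosure R (∐ (Matrix.vecCons T Ts)) := by
  classical
  obtain ⟨m, J, hJ⟩ := exists_ringObj_mem hT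
  let Ts : Fin m → D R := fun k => ∐ fun _ : J k => T
  -- Every summand of the coproduct is a retract of it.
  have hret (k : Fin (m + 1)) : ∃ (i : Matrix.vecCons T Ts k ⟶ ∐ (Matrix.vecCons T Ts))
      (p : ∐ (Matrix.vecCons T Ts) ⟶ Matrix.vecCons T Ts k), i ≫ p = 𝟙 _ :=
    ⟨_, _, Sigma.ι_π_eq_id (Matrix.vecCons T Ts) k⟩
  obtain ⟨i, p, hip⟩ := hret 0
  have he : Nonempty (∐ (Matrix.vecCons T Ts) ≅
      ∐ fun _ : (Σ k, (Fin.cons Unit J : Fin (m + 1) → Type) k) => T) := by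
    obtain ⟨u⟩ := nonempty_sigma_iso T (Fin.cons Unit J : Fin (m + 1) → Type)
    have hk (k : Fin (m + 1)) : Nonempty (Matrix.vecCons T Ts k ≅
        ∐ fun _ : (Fin.cons Unit J : Fin (m + 1) → Type) k => T) := by
      refine Fin.cases ?_ (fun k => ?_) k
      · exact ⟨(coproductUniqueIso (β := Unit) (fun _ => T)).symm⟩
      · exact ⟨Iso.refl _⟩
    exact ⟨Sigma.mapIso (fun k => (hk k).some) ≪≫ u⟩
  obtain ⟨e⟩ := he
  refine ⟨m, Ts, fun k => ⟨J k, 𝟙 _, 𝟙 _, Category.id_comp _⟩,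
    isSilting_of_iso hT e i p hip, addClosure_eq e i p hip, ?_⟩
  rintro S ⟨hS, hTS⟩
  refine hJ S hS (hS.2.2.2 _ _ hTS i p hip) fun k => ?_
  obtain ⟨i, p, hip⟩ := hret k.succ
  exact hS.2.2.2 _ _ hTS i p hip

end Stmt5
end
end

section
/- Let A be a cocomplete abelian category with enough projectives. An object X of the bounded derived category D^b(A) is isomorphic in D^b(A) to a bounded complex of projective objects of A if and only if for every object Y of D^b(A) there exists an integer N such that Hom_{D^b(A)}(X, Y[i]) = 0 for all i ≥ N. -/
/-!
If `X` is a bounded complex of projectives in degrees `≥ a`, it is K-projective, so morphisms from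
`X` in the derived category are represented by morphisms of complexes; these vanish when the target
is supported in degrees `< a`, which is the case for `Y⟦i⟧` when `i` is large.

Conversely, assume that for each `Y` the groups `Hom(X, Y⟦i⟧)` vanish for large `i`. Taking for `Y`
a countable coproduct of objects of `A` shows that the bound is uniform over the objects of `A`
(`exists_uniform_bound`); by dévissage with respect to the canonical t-structure
(`hom_eq_zero_of_single`), there is an `a` such that `X` has no nonzero morphism to any bounded
object in degrees `< a`. If `X` lives in degrees `≤ b`, choose a projective object `P` and
a morphism `P⟦-b⟧ ⟶ X` that is surjective on `H^b` (`exists_triangle`); its cone `C` lives in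
degrees `≤ b - 1`. When `b > a`, the cone inherits the vanishing property, so it is perfect by
induction on `b - a`, and `X` is the fiber of a morphism `C ⟶ P⟦1 - b⟧` between perfect objects,
hence perfect (`isPerf_obj₁`). When `b = a`, the morphism `X ⟶ C` is zero, so `X` is a retract of
`P⟦-a⟧`, and therefore a projective object placed in degree `a` (`isPerf_of_retract`).
-/

open CategoryTheory Limits

universe v u

namespace PerfectComplex

open DerivedCategory Pretriangulated Triangulated

universe w

variable {A : Type u} [Category.{v} A] [Abelian A]

/-! ### Bounded complexes of projectives -/

lemma isKProjective_of_bounded (P : CochainComplex A ℤ) (hP : ∀ n : ℤ, Projective (P.X n))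
    (b : ℤ) (hb : ∀ n : ℤ, b < n → IsZero (P.X n)) : P.IsKProjective := by
  have : P.IsStrictlyLE b := (P.isStrictlyLE_iff b).2 hb
  exact P.isKProjective_of_projective b

lemma projective_single (P : A) [Projective P] (b n : ℤ) :
    Projective (((HomologicalComplex.single A (ComplexShape.up ℤ) b).obj P).X n) := by
  by_cases h : n = b
  · subst h
    exact Projective.of_iso (HomologicalComplex.singleObjXSelf (.up ℤ) n P).symm inferInstance
  · exact Projective.of_iso (HomologicalComplex.isZero_single_obj_X _ _ _ _ h).isoZero.symm
      inferInstance

instance (P : A) [Projective P] (b : ℤ) : CochainComplex.IsKProjective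
    ((HomologicalComplex.single A (ComplexShape.up ℤ) b).obj P) :=
  have := projective_single P b
  CochainComplex.isKProjective_of_projective _ b

variable [HasDerivedCategory.{w} A]

/-- An object of the derived category is perfect if it is isomorphic to the image of a bounded
cochain complex all of whose terms are projective. -/
def IsPerf (E : DerivedCategory A) : Prop :=
  ∃ P : CochainComplex A ℤ,
    (∀ n : ℤ, Projective (P.X n)) ∧
    (∃ a b : ℤ, ∀ n : ℤ, (n < a ∨ b < n) → IsZero (P.X n)) ∧
    Nonempty (E ≅ Q.obj P)

lemma exists_Q_map_eq (P L : CochainComplex A ℤ) [P.IsKProjective] (f : Q.obj P ⟶ Q.obj L) :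
    ∃ g : P ⟶ L, Q.map g = f := by
  obtain ⟨g, hg⟩ := (CochainComplex.IsKProjective.Qh_map_bijective P
    ((HomotopyCategory.quotient _ _).obj L)).surjective
      ((quotientCompQhIso A).hom.app P ≫ f ≫ (quotientCompQhIso A).inv.app L)
  obtain ⟨g, rfl⟩ := (HomotopyCategory.quotient _ _).map_surjective g
  refine ⟨g, ?_⟩
  rw [← cancel_mono ((quotientCompQhIso A).inv.app L), quotientCompQhIso_inv_naturality, hg]
  simp

/-- A K-projective complex concentrated in degrees `≥ a` has no nonzero morphism to an object
with cohomology in degrees `< a`: such a morphism is represented by a morphism of complexes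
between complexes with disjoint supports. -/
lemma hom_eq_zero (P : CochainComplex A ℤ) [P.IsKProjective] (a n : ℤ) (hn : n < a)
    [P.IsStrictlyGE a] (Z : DerivedCategory A) [Z.IsLE n] (f : Q.obj P ⟶ Z) : f = 0 := by
  obtain ⟨L, _, ⟨e⟩⟩ := exists_iso_Q_obj_of_isLE Z n
  obtain ⟨g, hg⟩ := exists_Q_map_eq P L (f ≫ e.hom)
  have : g = 0 := by
    ext i
    by_cases hi : i < a
    · exact (P.isZero_of_isStrictlyGE a i hi).eq_of_src _ _
    · exact (L.isZero_of_isStrictlyLE n i (by lia)).eq_of_tgt _ _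
  rw [← cancel_mono e.hom, ← hg, this, zero_comp, Functor.map_zero]

lemma single_hom_eq_zero (P : A) [Projective P] (b n : ℤ) (hn : n < b) (Z : DerivedCategory A)
    [Z.IsLE n] (f : (singleFunctor A b).obj P ⟶ Z) : f = 0 :=
  hom_eq_zero ((HomologicalComplex.single A (ComplexShape.up ℤ) b).obj P) b n hn Z f

lemma isPerf_single (P : A) [Projective P] (b : ℤ) : IsPerf ((singleFunctor A b).obj P) :=
  ⟨(HomologicalComplex.single A (ComplexShape.up ℤ) b).obj P, projective_single P b,
    ⟨b, b, fun n hn ↦ HomologicalComplex.isZero_single_obj_X _ _ _ _ (by lia)⟩, ⟨Iso.refl _⟩⟩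

lemma IsPerf.of_iso {E F : DerivedCategory A} (hE : IsPerf E) (e : E ≅ F) : IsPerf F := by
  obtain ⟨P, h₁, h₂, ⟨e'⟩⟩ := hE
  exact ⟨P, h₁, h₂, ⟨e.symm ≪≫ e'⟩⟩

/-- Perfect objects are stable under fibers: a morphism between perfect objects lifts to
a morphism of complexes by K-projectivity, whose mapping cocone is again bounded with
projective terms. -/
lemma isPerf_obj₁ (T : Triangle (DerivedCategory A)) (hT : T ∈ distTriang _)
    (h₂ : IsPerf T.obj₂) (h₃ : IsPerf T.obj₃) : IsPerf T.obj₁ := by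
  obtain ⟨K, hK, ⟨a, b, hab⟩, ⟨e⟩⟩ := h₂
  obtain ⟨L, hL, ⟨c, d, hcd⟩, ⟨e'⟩⟩ := h₃
  have := isKProjective_of_bounded K hK b (fun n hn ↦ hab n (Or.inr hn))
  obtain ⟨g, hg⟩ := exists_Q_map_eq K L (e.inv ≫ T.mor₂ ≫ e'.hom)
  have hg' := mappingCocone_triangle_distinguished g
  obtain ⟨φ, hφ⟩ : ∃ φ : T.obj₁ ⟶ Q.obj (CochainComplex.mappingCocone g), IsIso φ := by
    obtain ⟨φ, hφ₁, hφ₂⟩ := complete_distinguished_triangle_morphism₁ T _ hT hg' e.hom e'.hom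
      (by
        change T.mor₂ ≫ e'.hom = e.hom ≫ Q.map g
        simp [hg])
    let ψ : T ⟶ _ := Triangle.homMk _ _ φ e.hom e'.hom hφ₁ (by
        change T.mor₂ ≫ e'.hom = e.hom ≫ Q.map g
        simp [hg]) hφ₂
    exact ⟨φ, isIso₁_of_isIso₂₃ ψ hT hg' (inferInstanceAs (IsIso e.hom))
      (inferInstanceAs (IsIso e'.hom))⟩
  have iso (n m : ℤ) (h : n + -1 = m) : (CochainComplex.mappingCocone g).X n ≅ K.X n ⊞ L.X m := by
    exact (CochainComplex.mappingCone g).shiftFunctorObjXIso (-1) n m h.symm ≪≫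
      HomologicalComplex.homotopyCofiber.XIsoBiprod g m n (by simp only [ComplexShape.up_Rel]; lia)
  refine ⟨CochainComplex.mappingCocone g, fun n ↦ ?_, ⟨min a (c + 1), max b (d + 1), fun n hn ↦ ?_⟩,
    ⟨asIso φ⟩⟩
  · exact Projective.of_iso (iso n _ rfl).symm inferInstance
  · refine IsZero.of_iso ?_ (iso n _ rfl)
    rw [biprod_isZero_iff]
    exact ⟨hab n (by lia), hcd _ (by lia)⟩

/-! ### Truncation and approximation by projectives -/

lemma isLE_of_homology (X : CochainComplex A ℤ) (b : ℤ)
    (h : ∀ n : ℤ, b < n → IsZero (X.homology n)) : (Q.obj X).IsLE b := by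
  rw [isLE_Q_obj_iff, CochainComplex.isLE_iff]
  intro i hi
  rw [HomologicalComplex.exactAt_iff_isZero_homology]
  exact h i hi

lemma isGE_of_homology (X : CochainComplex A ℤ) (a : ℤ)
    (h : ∀ n : ℤ, n < a → IsZero (X.homology n)) : (Q.obj X).IsGE a := by
  rw [isGE_Q_obj_iff, CochainComplex.isGE_iff]
  intro i hi
  rw [HomologicalComplex.exactAt_iff_isZero_homology]
  exact h i hi

/-- An object with cohomology in degrees `≤ b` admits a morphism from a projective object placed
in degree `b` which is surjective on `H^b`, so that its cone lives in degrees `≤ b - 1`. -/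
lemma exists_triangle [EnoughProjectives A] (X : DerivedCategory A) (b : ℤ) [X.IsLE b] :
    ∃ (P : A) (_ : Projective P) (C : DerivedCategory A) (_ : C.IsLE (b - 1))
      (f : (singleFunctor A b).obj P ⟶ X) (g : X ⟶ C)
      (h : C ⟶ ((singleFunctor A b).obj P)⟦(1 : ℤ)⟧), Triangle.mk f g h ∈ distTriang _ := by
  obtain ⟨K, _, ⟨e⟩⟩ := exists_iso_Q_obj_of_isLE X b
  let P := Projective.over (K.X b)
  let φ : (HomologicalComplex.single A (ComplexShape.up ℤ) b).obj P ⟶ K :=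
    HomologicalComplex.mkHomFromSingle (Projective.π (K.X b)) (fun k hk ↦
      (K.isZero_of_isStrictlyLE b k (by
        simp only [ComplexShape.up_Rel] at hk; lia)).eq_of_tgt _ _)
  have hφ : Epi (HomologicalComplex.homologyMap φ b) := by
    have hd : K.d b (b + 1) = 0 := (K.isZero_of_isStrictlyLE b (b + 1) (by lia)).eq_of_tgt _ _
    have : IsIso (K.iCycles b) := K.isIso_iCycles b (b + 1) (by simp) hd
    have : IsIso ((((HomologicalComplex.single A (ComplexShape.up ℤ) b).obj P)).iCycles b) :=
      HomologicalComplex.isIso_iCycles _ b (b + 1) (by simp)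
        ((HomologicalComplex.isZero_single_obj_X _ _ _ _ (by lia)).eq_of_tgt _ _)
    have h₁ : Epi (φ.f b) := by
      simp only [φ, HomologicalComplex.mkHomFromSingle_f]
      infer_instance
    have h₂ : Epi (HomologicalComplex.cyclesMap φ b) := by
      have : HomologicalComplex.cyclesMap φ b =
        HomologicalComplex.iCycles _ b ≫ φ.f b ≫ inv (K.iCycles b) := by
        rw [← cancel_mono (K.iCycles b)]
        simp
      rw [this]
      infer_instance
    have : Epi (HomologicalComplex.homologyπ _ b ≫ HomologicalComplex.homologyMap φ b) := by
      rw [HomologicalComplex.homologyπ_naturality]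
      infer_instance
    exact epi_of_epi (HomologicalComplex.homologyπ _ b) _
  let f : (singleFunctor A b).obj P ⟶ X := Q.map φ ≫ e.inv
  have hf : Epi ((homologyFunctor A b).map f) := by
    have : Epi ((homologyFunctor A b).map (Q.map φ)) := by
      have := (MorphismProperty.epimorphisms A).arrow_mk_iso_iff
        (Arrow.isoOfNatIso (homologyFunctorFactors A b) (Arrow.mk φ))
      exact this.2 hφ
    change Epi ((homologyFunctor A b).map (Q.map φ ≫ e.inv))
    rw [Functor.map_comp]
    infer_instance
  obtain ⟨C, g, h, hT⟩ := distinguished_cocone_triangle f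
  refine ⟨P, inferInstance, C, ?_, f, g, h, hT⟩
  rw [isLE_iff]
  intro i hi
  refine (HomologySequence.exact₃ _ hT i (i + 1)).isZero_of_both_zeros ?_ ?_
  · change (homologyFunctor A i).map (Triangle.mk f g h).mor₂ = 0
    rw [← HomologySequence.epi_homologyMap_mor₁_iff _ hT]
    by_cases h : i = b
    · subst h; exact hf
    · have := (isZero_of_isLE X b i (by lia))
      exact ⟨fun _ _ _ ↦ this.eq_of_src _ _⟩
  · exact (isZero_of_isLE ((singleFunctor A b).obj P) b (i + 1) (by lia)).eq_of_tgt _ _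

lemma exists_isGE_obj₃ {X C : DerivedCategory A} {P : A} {b : ℤ}
    {f : (singleFunctor A b).obj P ⟶ X} {g : X ⟶ C}
    {h : C ⟶ ((singleFunctor A b).obj P)⟦(1 : ℤ)⟧} (hT : Triangle.mk f g h ∈ distTriang _)
    (hX : ∃ c, X.IsGE c) : ∃ c, C.IsGE c := by
  obtain ⟨c, hc⟩ := hX
  refine ⟨min c (b - 1), TStructure.t.isGE₂ _ (rot_of_distTriang _ hT) _ ?_ ?_⟩
  · exact TStructure.t.isGE_of_ge X _ c (by lia)
  · have := TStructure.t.isGE_shift ((singleFunctor A b).obj P) b 1 (b - 1)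
    exact TStructure.t.isGE_of_ge (((singleFunctor A b).obj P)⟦(1 : ℤ)⟧) _ (b - 1) (by lia)

/-- Dévissage: if `X` has no nonzero morphism to single objects in degrees `< a`, then it has
none to bounded objects in degrees `< a`. The induction is on the amplitude `k` of the target,
whose cohomology lies in degrees `c, …, c + k - 1`. -/
lemma hom_eq_zero_of_single (X : DerivedCategory A) (a : ℤ)
    (hX : ∀ (M : A) (n : ℤ), n < a → ∀ f : X ⟶ (singleFunctor A n).obj M, f = 0)
    (k : ℕ) (c : ℤ) (hc : c + k ≤ a) (Z : DerivedCategory A) [Z.IsGE c] [Z.IsLE (c + k - 1)]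
    (f : X ⟶ Z) : f = 0 := by
  induction k generalizing c Z with
  | zero => exact (TStructure.t.isZero Z (c + (0 : ℕ) - 1) c (by lia)).eq_of_tgt _ _
  | succ k ih =>
    obtain ⟨U, V, hU, hV, u, v, w, hT⟩ := TStructure.t.exists_triangle Z c (c + 1) rfl
    have hU : U.IsLE c := ⟨hU⟩
    have hV : V.IsGE (c + 1) := ⟨hV⟩
    have hV' : V.IsLE (c + 1 + k - 1) := by
      refine TStructure.t.isLE₂ _ (rot_of_distTriang _ hT) _ ?_ ?_
      · exact TStructure.t.isLE_of_le Z (c + (k + 1 : ℕ) - 1) _ (by push_cast; lia)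
      · have := TStructure.t.isLE_shift U c 1 (c - 1)
        exact TStructure.t.isLE_of_le (U⟦(1 : ℤ)⟧) (c - 1) _ (by lia)
    have hU' : U.IsGE c := by
      refine TStructure.t.isGE₂ _ (inv_rot_of_distTriang _ hT) _ ?_ ?_
      · have := TStructure.t.isGE_shift V (c + 1) (-1) (c + 2)
        exact TStructure.t.isGE_of_ge (V⟦(-1 : ℤ)⟧) _ (c + 2) (by lia)
      · exact inferInstanceAs (Z.IsGE c)
    have hfv : f ≫ v = 0 := ih (c + 1) (by push_cast at hc; lia) V (f ≫ v)
    obtain ⟨f', hf'⟩ : ∃ f' : X ⟶ U, f = f' ≫ u := Triangle.coyoneda_exact₂ _ hT f hfv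
    obtain ⟨M, ⟨e⟩⟩ := exists_iso_singleFunctor_obj_of_isGE_of_isLE U c
    have h0 := hX M c (by push_cast at hc; lia) (f' ≫ e.hom)
    have : f' = 0 := by rw [← cancel_mono e.hom, h0, zero_comp]
    rw [hf', this, zero_comp]

/-! ### Perfection from vanishing of morphisms -/

/-- A retract of a projective object placed in degree `a` is perfect. -/
lemma isPerf_of_retract (X : DerivedCategory A) (a : ℤ) (P : A) [Projective P]
    (s : X ⟶ (singleFunctor A a).obj P) (r : (singleFunctor A a).obj P ⟶ X) (hsr : s ≫ r = 𝟙 X) :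
    IsPerf X := by
  have key (n : ℤ) (h : IsZero ((homologyFunctor A n).obj ((singleFunctor A a).obj P))) :
      IsZero ((homologyFunctor A n).obj X) := by
    rw [IsZero.iff_id_eq_zero, ← CategoryTheory.Functor.map_id, ← hsr, Functor.map_comp,
      h.eq_of_tgt ((homologyFunctor A n).map s) 0, zero_comp]
  have : X.IsLE a := (isLE_iff _ _).2 fun i hi ↦ key i (isZero_of_isLE _ a i hi)
  have : X.IsGE a := (isGE_iff _ _).2 fun i hi ↦ key i (isZero_of_isGE _ a i hi)
  obtain ⟨M, ⟨e⟩⟩ := exists_iso_singleFunctor_obj_of_isGE_of_isLE X a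
  obtain ⟨s', hs'⟩ := (singleFunctor A a).map_surjective (e.inv ≫ s)
  obtain ⟨r', hr'⟩ := (singleFunctor A a).map_surjective (r ≫ e.hom)
  have hM : s' ≫ r' = 𝟙 M := (singleFunctor A a).map_injective (by
    rw [Functor.map_comp, hs', hr', Category.assoc, reassoc_of% hsr]
    simp)
  have : Projective M := Retract.projective ⟨s', r', hM⟩
  exact (isPerf_single M a).of_iso e.symm

/-- The induction: `X` bounded in degrees `≤ a + k` with no nonzero morphism to bounded objects in
degrees `< a` is perfect. Each step replaces `X` by the cone of a morphism from a projective object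
that is surjective on `H^{a + k}`; when `k = 0`, this cone receives no nonzero map from `X`, so `X`
is a retract of a projective object placed in degree `a`. -/
lemma isPerf_of_hom_eq_zero [EnoughProjectives A] (a : ℤ) (k : ℕ) (X : DerivedCategory A)
    [X.IsLE (a + k)] (hX : ∃ c, X.IsGE c)
    (h : ∀ (Z : DerivedCategory A), (∃ c, Z.IsGE c) → Z.IsLE (a - 1) → ∀ f : X ⟶ Z, f = 0) :
    IsPerf X := by
  induction k generalizing X with
  | zero =>
    obtain ⟨P, _, C, hC, f, g, δ, hT⟩ := exists_triangle X (a + (0 : ℕ))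
    have hg : g = 0 := h C (exists_isGE_obj₃ hT hX) (by simpa using hC) g
    obtain ⟨s, hs⟩ : ∃ s : X ⟶ _, 𝟙 X = s ≫ f :=
      Triangle.coyoneda_exact₂ _ hT (𝟙 X) (by subst hg; exact comp_zero)
    exact isPerf_of_retract X _ P s f hs.symm
  | succ k ih =>
    obtain ⟨P, _, C, hC, f, g, δ, hT⟩ := exists_triangle X (a + (k + 1 : ℕ))
    have : C.IsLE (a + k) := TStructure.t.isLE_of_le C (a + (k + 1 : ℕ) - 1) _ (by push_cast; lia)
    let e : (((singleFunctor A (a + (k + 1 : ℕ))).obj P)⟦(1 : ℤ)⟧) ≅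
        (singleFunctor A (a + k)).obj P :=
      ((singleFunctors A).shiftIso 1 (a + k) (a + (k + 1 : ℕ)) (by push_cast; lia)).app P
    refine isPerf_obj₁ _ (rot_of_distTriang _ hT) (ih C (exists_isGE_obj₃ hT hX) ?_)
      ((isPerf_single P _).of_iso e.symm)
    intro Z hZ hZ' φ
    obtain ⟨ψ, hψ⟩ : ∃ ψ : (((singleFunctor A (a + (k + 1 : ℕ))).obj P)⟦(1 : ℤ)⟧) ⟶ Z,
      φ = δ ≫ ψ := Triangle.yoneda_exact₃ _ hT φ (h Z hZ hZ' _)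
    have h0 := single_hom_eq_zero P (a + k) (a - 1) (by lia) Z (e.inv ≫ ψ)
    have : ψ = 0 := by rw [← cancel_epi e.inv, h0, comp_zero]
    rw [hψ, this, comp_zero]

/-! ### Uniformity of the bound and the characterization -/

/-- If every object `M` of `A` admits a bound beyond which `X` has no nonzero morphism to `M⟦i⟧`,
then the bound can be chosen independently of `M`: otherwise, the countable coproduct
of a sequence of counterexamples, each of which is a retract of it, admits no bound. -/
lemma exists_uniform_bound [HasColimits A] (X : DerivedCategory A)
    (h : ∀ M : A, ∃ N : ℤ, ∀ i : ℤ, N ≤ i →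
      ∀ f : X ⟶ ((singleFunctor A 0).obj M)⟦i⟧, f = 0) :
    ∃ N : ℤ, ∀ (M : A) (i : ℤ), N ≤ i →
      ∀ f : X ⟶ ((singleFunctor A 0).obj M)⟦i⟧, f = 0 := by
  by_contra! H
  choose M i hi f hf using H
  -- the index type has to live in the universe of the morphisms of `A`
  let F : ULift.{v} ℕ → A := fun n ↦ M (n.down : ℤ)
  obtain ⟨N, hN⟩ := h (∐ F)
  let n : ULift.{v} ℕ := ⟨N.toNat⟩
  have h0 := hN (i n.down) (by have := hi n.down; simp only [n] at this ⊢; lia)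
    (f n.down ≫ ((singleFunctor A 0).map (Sigma.ι F n))⟦i n.down⟧')
  apply hf n.down
  have h1 : f n.down ≫ ((singleFunctor A 0).map (Sigma.ι F n ≫ Sigma.π F n))⟦i n.down⟧' = 0 := by
    rw [Functor.map_comp, Functor.map_comp, reassoc_of% h0, zero_comp]
  rw [Sigma.ι_π_eq_id, CategoryTheory.Functor.map_id, CategoryTheory.Functor.map_id] at h1
  exact (Category.comp_id _).symm.trans h1

end PerfectComplex

open PerfectComplex

/-- Let `A` be a cocomplete abelian category with enough projectives. An
object `X` of the bounded derived category `D^b(A)` (here: a cohomologically bounded complex,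
with morphisms computed in the derived category) is isomorphic to a bounded complex of
projective objects of `A` if and only if for every object `Y` of `D^b(A)` there is an integer
`N` with `Hom(X, Y[i]) = 0` for all `i ≥ N`. -/
theorem stmt_8 {A : Type u} [Category.{v} A] [Abelian A] [HasColimits A]
    [EnoughProjectives A] [HasDerivedCategory A]
    (X : CochainComplex A ℤ)
    (hX : ∃ a b : ℤ, ∀ n : ℤ, (n < a ∨ b < n) → IsZero (X.homology n)) :
    (∃ P : CochainComplex A ℤ,
      (∀ n : ℤ, Projective (P.X n)) ∧
      (∃ a b : ℤ, ∀ n : ℤ, (n < a ∨ b < n) → IsZero (P.X n)) ∧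
      Nonempty (DerivedCategory.Q.obj X ≅ DerivedCategory.Q.obj P)) ↔
    (∀ Y : CochainComplex A ℤ,
      (∃ a b : ℤ, ∀ n : ℤ, (n < a ∨ b < n) → IsZero (Y.homology n)) →
      ∃ N : ℤ, ∀ i : ℤ, N ≤ i →
        ∀ f : DerivedCategory.Q.obj X ⟶ (DerivedCategory.Q.obj Y)⟦i⟧, f = 0) := by
  constructor
  · rintro ⟨P, hP, ⟨a, b, hab⟩, ⟨e⟩⟩ Y ⟨c, d, hcd⟩
    have := isKProjective_of_bounded P hP b (fun n hn ↦ hab n (Or.inr hn))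
    have : P.IsStrictlyGE a := (P.isStrictlyGE_iff a).2 fun n hn ↦ hab n (Or.inl hn)
    have := isLE_of_homology Y d fun n hn ↦ hcd n (Or.inr hn)
    refine ⟨d - a + 1, fun i hi f ↦ ?_⟩
    have : DerivedCategory.IsLE ((DerivedCategory.Q.obj Y)⟦i⟧) (d - i) :=
      DerivedCategory.TStructure.t.isLE_shift _ d i (d - i)
    rw [← cancel_epi e.inv, comp_zero]
    exact hom_eq_zero P a (d - i) (by lia) _ _
  · intro h
    obtain ⟨a, b, hab⟩ := hX
    have hLE := isLE_of_homology X b fun n hn ↦ hab n (Or.inr hn)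
    have hGE := isGE_of_homology X a fun n hn ↦ hab n (Or.inl hn)
    obtain ⟨N, hN⟩ := exists_uniform_bound (DerivedCategory.Q.obj X) fun M ↦
      h ((HomologicalComplex.single A (ComplexShape.up ℤ) 0).obj M)
        ⟨0, 0, fun n hn ↦ ShortComplex.isZero_homology_of_isZero_X₂ _
          (HomologicalComplex.isZero_single_obj_X (ComplexShape.up ℤ) 0 M n (by lia))⟩
    -- morphisms to `M⟦i⟧`, a single object in degree `-i`, vanish as soon as `-i < 1 - N`
    have hN' (M : A) (n : ℤ) (hn : n < 1 - N)
        (f : DerivedCategory.Q.obj X ⟶ (DerivedCategory.singleFunctor A n).obj M) : f = 0 := by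
      let e := ((DerivedCategory.singleFunctors A).shiftIso (-n) n 0 (by lia)).app M
      have h0 := hN M (-n) (by lia) (f ≫ e.inv)
      rw [← cancel_mono e.inv, h0, zero_comp]
    let k : ℕ := (b - (1 - N)).toNat
    have : DerivedCategory.IsLE (DerivedCategory.Q.obj X) (1 - N + k) :=
      DerivedCategory.TStructure.t.isLE_of_le _ b _ (by lia)
    refine isPerf_of_hom_eq_zero (1 - N) k _ ⟨a, hGE⟩ ?_
    rintro Z ⟨c, hc⟩ hZ f
    let c' : ℤ := min c (1 - N)
    have : Z.IsGE c' := DerivedCategory.TStructure.t.isGE_of_ge Z _ c (by lia)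
    have : Z.IsLE (c' + (1 - N - c').toNat - 1) :=
      DerivedCategory.TStructure.t.isLE_of_le Z (1 - N - 1) _ (by lia)
    exact hom_eq_zero_of_single _ (1 - N) hN' (1 - N - c').toNat c' (by lia) Z f
end

section
/- In the ring R = k[x₁, x₂, …, y]/(x_i x_j, y^i x_i : i, j ≥ 1), there exists an injective R-module endomorphism h of the y-power torsion submodule t(R) such that h(x_n) = y·x_{n+1} for every n ≥ 1. -/
/-! The idea: the substitution `y ↦ y`, `xₙ ↦ y xₙ₊₁` respects the relations, so it defines a
`k`-algebra endomorphism `shift` of `R`, and `h` is its restriction to `t(R)`.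

Write `J` for the ideal generated by the `xₙ`. Setting all `xₙ` to zero gives a retraction
`toPoly : R → k[Y]` of `ofPoly : k[Y] → R`, and every `r` is congruent to `ofPoly (toPoly r)`
modulo `J` (`sub_mem_J`). Since `k[Y]` is a domain, `t(R) ⊆ J`; since `J² = 0`, each element of
`t(R)` is a finite sum `∑ fₙ(y) xₙ` (`exists_sum`), and `r` acts on `J` through `toPoly r`.
As `shift` fixes `y`, it follows that `shift` is `R`-linear on `t(R)`.

For injectivity, the coefficient of `xₙ` modulo `Yⁿ` is read off by the homomorphism `coeffHom n`
from `R` to the dual numbers over `k[Y]/(Yⁿ)` with `xₙ ↦ ε` and `xₘ ↦ 0` for `m ≠ n`. If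
`∑ y fₙ(y) xₙ₊₁ = 0`, then `Yⁿ⁺¹ ∣ Y fₙ`, so `Yⁿ ∣ fₙ` and `fₙ(y) xₙ = 0` for all `n`. -/

open MvPolynomial

set_option maxHeartbeats 1000000
set_option synthInstance.maxHeartbeats 400000

noncomputable section

/-- The polynomial ring `k[x₁, x₂, …, y]`, with `y` the variable `none` and `xₙ` (`n ≥ 1`)
the variable `some n`. -/
abbrev PolyR (k : Type) [Field k] : Type := MvPolynomial (Option ℕ+) k

/-- The variable `y`. -/
def yP (k : Type) [Field k] : PolyR k := X none

/-- The variable `xₙ`, for `n ≥ 1`. -/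
def xP (k : Type) [Field k] (n : ℕ+) : PolyR k := X (some n)

/-- The set of relations `xᵢxⱼ` (`i, j ≥ 1`) and `yⁱxᵢ` (`i ≥ 1`). -/
def relSet (k : Type) [Field k] : Set (PolyR k) :=
  {p | (∃ i j : ℕ+, p = xP k i * xP k j) ∨ (∃ i : ℕ+, p = yP k ^ (i : ℕ) * xP k i)}

/-- The ring `R = k[x₁, x₂, …, y]/(xᵢxⱼ, yⁱxᵢ : i, j ≥ 1)`. -/
abbrev Rg (k : Type) [Field k] : Type := PolyR k ⧸ Ideal.span (relSet k)

/-- The image of `y` in `R`. -/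
def yR (k : Type) [Field k] : Rg k := Ideal.Quotient.mk _ (yP k)

/-- The image of `xₙ` in `R`. -/
def xR (k : Type) [Field k] (n : ℕ+) : Rg k := Ideal.Quotient.mk _ (xP k n)

/-- The `y`-power torsion submodule `t(R) = {r ∈ R : yᵏ r = 0 for some k ≥ 0}`. -/
def tR (k : Type) [Field k] : Submodule (Rg k) (Rg k) :=
  Submodule.torsion' (Rg k) (Rg k) (Submonoid.powers (yR k))

end

noncomputable section

namespace Stmt13

variable {k : Type} [Field k]

theorem xR_mul_xR (i j : ℕ+) : xR k i * xR k j = 0 := by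
  rw [xR, xR, ← map_mul, Ideal.Quotient.eq_zero_iff_mem]
  exact Ideal.subset_span (Or.inl ⟨i, j, rfl⟩)

theorem yR_pow_mul_xR (i : ℕ+) : yR k ^ (i : ℕ) * xR k i = 0 := by
  rw [xR, yR, ← map_pow, ← map_mul, Ideal.Quotient.eq_zero_iff_mem]
  exact Ideal.subset_span (Or.inr ⟨i, rfl⟩)

/-- The universal property of `R`: elements `y`, `xₙ` of a commutative `k`-algebra satisfying the
defining relations determine a `k`-algebra homomorphism out of `R`. -/
def liftR {A : Type} [CommRing A] [Algebra k A] (y : A) (x : ℕ+ → A)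
    (hxx : ∀ i j, x i * x j = 0) (hyx : ∀ i : ℕ+, y ^ (i : ℕ) * x i = 0) : Rg k →ₐ[k] A :=
  Ideal.Quotient.liftₐ _ (aeval (fun o : Option ℕ+ => o.elim y x)) (by
    intro a ha
    have hle : Ideal.span (relSet k) ≤
        RingHom.ker (aeval (R := k) (fun o : Option ℕ+ => o.elim y x)) := by
      rw [Ideal.span_le]
      rintro p (⟨i, j, rfl⟩ | ⟨i, rfl⟩)
      · simp [RingHom.mem_ker, xP, hxx]
      · simp [RingHom.mem_ker, xP, yP, hyx]
    exact hle ha)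

section
variable {A : Type} [CommRing A] [Algebra k A] (y : A) (x : ℕ+ → A)
    (hxx : ∀ i j, x i * x j = 0) (hyx : ∀ i : ℕ+, y ^ (i : ℕ) * x i = 0)

@[simp] theorem liftR_yR : liftR y x hxx hyx (yR k) = y := by
  change aeval (fun o : Option ℕ+ => o.elim y x) (X none) = y
  simp

@[simp] theorem liftR_xR (n : ℕ+) : liftR y x hxx hyx (xR k n) = x n := by
  change aeval (fun o : Option ℕ+ => o.elim y x) (X (some n)) = x n
  simp

end

/-- The `k`-algebra endomorphism of `R` with `y ↦ y` and `xₙ ↦ y xₙ₊₁`. -/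
def shift : Rg k →ₐ[k] Rg k :=
  liftR (yR k) (fun n => yR k * xR k (n + 1))
    (fun i j => by rw [mul_mul_mul_comm, xR_mul_xR, mul_zero])
    (fun i => by
      have := yR_pow_mul_xR (k := k) (i + 1)
      rwa [PNat.add_coe, PNat.one_coe, pow_succ, mul_assoc] at this)

theorem shift_yR : shift (yR k) = yR k := liftR_yR _ _ _ _

/-- The `k`-algebra map `R → k[Y]` with `y ↦ Y` and `xₙ ↦ 0`. -/
def toPoly : Rg k →ₐ[k] Polynomial k :=
  liftR Polynomial.X (fun _ => 0) (by simp) (by simp)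

/-- The `k`-algebra map `k[Y] → R`, `f ↦ f(y)`. -/
def ofPoly : Polynomial k →ₐ[k] Rg k := Polynomial.aeval (yR k)

variable (k) in
/-- The ideal of `R` generated by the `xₙ`. -/
def J : Ideal (Rg k) := Ideal.span (Set.range (xR k))

theorem sub_mem_J (r : Rg k) : r - ofPoly (toPoly r) ∈ J k := by
  have h : (Ideal.Quotient.mkₐ k (J k)).comp (Ideal.Quotient.mkₐ k (Ideal.span (relSet k))) =
      ((Ideal.Quotient.mkₐ k (J k)).comp (ofPoly.comp toPoly)).comp
        (Ideal.Quotient.mkₐ k (Ideal.span (relSet k))) := by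
    apply MvPolynomial.algHom_ext
    rintro (_ | n)
    · change Ideal.Quotient.mk (J k) (yR k) = Ideal.Quotient.mk (J k) (ofPoly (toPoly (yR k)))
      simp [toPoly, ofPoly]
    · change Ideal.Quotient.mk (J k) (xR k n) = Ideal.Quotient.mk (J k) (ofPoly (toPoly (xR k n)))
      rw [Ideal.Quotient.eq]
      have h0 : toPoly (xR k n) = 0 := by simp [toPoly]
      rw [h0, map_zero, sub_zero]
      exact Ideal.subset_span ⟨n, rfl⟩
  obtain ⟨p, rfl⟩ := Ideal.Quotient.mk_surjective r
  rw [← Ideal.Quotient.eq]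
  exact DFunLike.congr_fun h p

theorem mul_xR_of_mem_J {j : Rg k} (hj : j ∈ J k) (n : ℕ+) : j * xR k n = 0 := by
  induction hj using Submodule.span_induction with
  | mem a ha => obtain ⟨m, rfl⟩ := ha; exact xR_mul_xR m n
  | zero => exact zero_mul _
  | add a b _ _ ha hb => rw [add_mul, ha, hb, add_zero]
  | smul c a _ ha => rw [smul_eq_mul, mul_assoc, ha, mul_zero]

theorem mul_xR (r : Rg k) (n : ℕ+) : r * xR k n = ofPoly (toPoly r) * xR k n := by
  rw [← sub_eq_zero, ← sub_mul]
  exact mul_xR_of_mem_J (sub_mem_J r) n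

theorem shift_ofPoly (f : Polynomial k) : shift (ofPoly f) = ofPoly f := by
  have : (shift (k := k)).comp ofPoly = ofPoly := by
    apply Polynomial.algHom_ext
    simp [ofPoly, shift]
  exact DFunLike.congr_fun this f

theorem toPoly_ofPoly (f : Polynomial k) : toPoly (ofPoly f) = f := by
  have : (toPoly (k := k)).comp ofPoly = AlgHom.id k _ := by
    apply Polynomial.algHom_ext
    simp [ofPoly, toPoly]
  exact DFunLike.congr_fun this f

/-- `toPoly` is unchanged by `shift`, because the `xₙ` are sent into `J`. -/
theorem toPoly_shift (r : Rg k) : toPoly (shift r) = toPoly r := by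
  have hJ : ∀ a ∈ J k, toPoly (shift a) = 0 := by
    intro a ha
    have hle : J k ≤ RingHom.ker (toPoly.comp (shift (k := k))) := by
      rw [J, Ideal.span_le]
      rintro _ ⟨n, rfl⟩
      simp [RingHom.mem_ker, shift, toPoly]
    exact hle ha
  have := hJ _ (sub_mem_J r)
  rwa [map_sub, map_sub, shift_ofPoly, toPoly_ofPoly, sub_eq_zero] at this

theorem exists_pow_mul {a : Rg k} (ha : a ∈ tR k) : ∃ n : ℕ, yR k ^ n * a = 0 := by
  rw [tR, Submodule.mem_torsion'_iff] at ha
  obtain ⟨⟨_, n, rfl⟩, h⟩ := ha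
  exact ⟨n, h⟩

theorem mem_J_of_mem_tR {a : Rg k} (ha : a ∈ tR k) : a ∈ J k := by
  obtain ⟨n, hn⟩ := exists_pow_mul ha
  have h0 : toPoly a = 0 := by
    have := congrArg toPoly hn
    simpa [toPoly] using this
  simpa [h0] using sub_mem_J a

theorem exists_sum {a : Rg k} (ha : a ∈ tR k) :
    ∃ (s : Finset ℕ+) (f : ℕ+ → Polynomial k), a = ∑ n ∈ s, ofPoly (f n) * xR k n := by
  obtain ⟨c, hc⟩ := (Finsupp.mem_span_range_iff_exists_finsupp).1 (mem_J_of_mem_tR ha)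
  refine ⟨c.support, fun n => toPoly (c n), ?_⟩
  rw [← hc]
  exact Finset.sum_congr rfl fun n _ => mul_xR (c n) n

theorem shift_sum (s : Finset ℕ+) (f : ℕ+ → Polynomial k) :
    shift (∑ n ∈ s, ofPoly (f n) * xR k n) =
      ∑ n ∈ s, ofPoly (f n * Polynomial.X) * xR k (n + 1) := by
  rw [map_sum]
  refine Finset.sum_congr rfl fun n _ => ?_
  rw [map_mul, shift_ofPoly]
  simp [shift, ofPoly, mul_assoc]

theorem shift_mul {a : Rg k} (ha : a ∈ tR k) (r : Rg k) : shift (r * a) = r * shift a := by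
  obtain ⟨s, f, rfl⟩ := exists_sum ha
  rw [map_mul, shift_sum, Finset.mul_sum, Finset.mul_sum]
  refine Finset.sum_congr rfl fun n _ => ?_
  rw [mul_left_comm, mul_xR, toPoly_shift, ← mul_xR, mul_left_comm]

theorem shift_mem {a : Rg k} (ha : a ∈ tR k) : shift a ∈ tR k := by
  obtain ⟨n, hn⟩ := exists_pow_mul ha
  rw [tR, Submodule.mem_torsion'_iff]
  refine ⟨⟨yR k ^ n, n, rfl⟩, ?_⟩
  have := congrArg shift hn
  rwa [map_mul, map_pow, map_zero, shift_yR] at this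

variable (k) in
/-- The truncated polynomial ring `k[Y]/(Yⁿ)`. -/
abbrev Trunc (n : ℕ+) : Type := Polynomial k ⧸ Ideal.span {(Polynomial.X : Polynomial k) ^ (n : ℕ)}

/-- The `k`-algebra map from `R` to the dual numbers over `k[Y]/(Yⁿ)` with `y ↦ Y`, `xₙ ↦ ε` and
`xₘ ↦ 0` for `m ≠ n`. -/
def coeffHom (n : ℕ+) : Rg k →ₐ[k] DualNumber (Trunc k n) :=
  liftR (A := DualNumber (Trunc k n))
    (TrivSqZeroExt.inl (Ideal.Quotient.mk _ Polynomial.X : Trunc k n))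
    (fun m => if m = n then DualNumber.eps else 0)
    (fun i j => by split_ifs <;> simp)
    (fun i => by
      split_ifs with h
      · subst h
        have h0 : (Ideal.Quotient.mk _ Polynomial.X : Trunc k i) ^ (i : ℕ) = 0 := by
          rw [← map_pow, Ideal.Quotient.eq_zero_iff_mem]
          exact Ideal.mem_span_singleton_self _
        change TrivSqZeroExt.inlHom (Trunc k i) (Trunc k i) _ ^ (i : ℕ) * _ = 0
        rw [← map_pow, h0, map_zero, zero_mul]
      · simp)

theorem coeffHom_ofPoly (n : ℕ+) (f : Polynomial k) :
    coeffHom n (ofPoly f) = TrivSqZeroExt.inl (Ideal.Quotient.mk _ f) := by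
  have : (coeffHom (k := k) n).comp ofPoly =
      (TrivSqZeroExt.inlAlgHom k (Trunc k n) (Trunc k n)).comp (Ideal.Quotient.mkₐ k _) := by
    apply Polynomial.algHom_ext
    simp [ofPoly, coeffHom]
  exact DFunLike.congr_fun this f

/-- The `ε`-component of `coeffHom (m + 1)` is the coefficient of `xₘ₊₁` modulo `Yᵐ⁺¹`. -/
theorem snd_coeffHom_sum (s : Finset ℕ+) (g : ℕ+ → Polynomial k) {m : ℕ+} (hm : m ∈ s) :
    (coeffHom (m + 1) (∑ n ∈ s, ofPoly (g n) * xR k (n + 1))).snd =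
      Ideal.Quotient.mk _ (g m) := by
  rw [map_sum, Finset.sum_eq_single_of_mem m hm]
  · have hx : coeffHom (k := k) (m + 1) (xR k (m + 1)) = DualNumber.eps := by simp [coeffHom]
    rw [map_mul, coeffHom_ofPoly, hx, DualNumber.snd_mul, TrivSqZeroExt.fst_inl,
      DualNumber.snd_eps, DualNumber.fst_eps, mul_one, mul_zero, add_zero]
  · intro n _ hn
    rw [map_mul]
    simp [coeffHom, hn]

theorem shift_eq_zero {a : Rg k} (ha : a ∈ tR k) (h : shift a = 0) : a = 0 := by
  obtain ⟨s, f, rfl⟩ := exists_sum ha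
  rw [shift_sum] at h
  refine Finset.sum_eq_zero fun m hm => ?_
  have h1 := snd_coeffHom_sum s (fun n => f n * Polynomial.X) hm
  rw [h, map_zero, TrivSqZeroExt.snd_zero, eq_comm, Ideal.Quotient.eq_zero_iff_mem,
    Ideal.mem_span_singleton, PNat.add_coe, PNat.one_coe, pow_succ] at h1
  obtain ⟨g, hg⟩ := (mul_dvd_mul_iff_right Polynomial.X_ne_zero).1 h1
  rw [hg, map_mul, map_pow, mul_right_comm]
  simp [ofPoly, yR_pow_mul_xR]

end Stmt13

end

/-- In `R = k[x₁, x₂, …, y]/(xᵢxⱼ, yⁱxᵢ)`, there is an injective `R`-module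
endomorphism `h` of the `y`-power torsion submodule `t(R)` with `h(xₙ) = y·x_{n+1}` for all
`n ≥ 1`. -/
theorem stmt_13 (k : Type) [Field k] :
    ∃ h : tR k →ₗ[Rg k] tR k, Function.Injective h ∧
      ∀ (n : ℕ+) (a : tR k), (a : Rg k) = xR k n →
        ((h a : Rg k) = yR k * xR k (n + 1)) := by
  refine ⟨{ toFun := fun a => ⟨Stmt13.shift a.1, Stmt13.shift_mem a.2⟩
            map_add' := fun a b => Subtype.ext (map_add Stmt13.shift a.1 b.1)
            map_smul' := fun r a => Subtype.ext (Stmt13.shift_mul a.2 r) }, ?_, ?_⟩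
  · rw [injective_iff_map_eq_zero]
    intro a ha
    exact Subtype.ext (Stmt13.shift_eq_zero a.2 (congrArg Subtype.val ha))
  · intro n a ha
    change Stmt13.shift (a : Rg k) = _
    rw [ha]
    simp [Stmt13.shift]
end
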